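/- arXiv:2206.08546 — 3 statements merged into one kernel-verified Lean document; each statement's English description precedes it below -/
import Mathlib

section
/- A morphism f : K → L of Banach spaces is pure if and only if f is a linear isometric embedding (‖f x‖ = ‖x‖ for all x ∈ K) and its image f[K], which is then a closed subspace of L, is an ideal in L. -/
/-!
Purity with `A = ℂ`, and `B = ℂ` reached through multiplication by some `c ≥ ‖f x‖`, forces
`1 ≤ c + ε` for every unit vector `x`, so a pure morphism is isometric. Purity applied to the
inclusion of `B ∩ f[K]` into a finite-dimensional `B ⊆ L` yields a contraction `t : B → f[K]` that is
only approximately the identity on `B ∩ f[K]`. Adding the error, extended to `B` along a bounded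
projection onto `B ∩ f[K]`, makes it exact, at the cost of a small increase of the norm.

Conversely, if `f` is isometric and its range is an ideal, apply the ideal property to the range of
`v`, compose the resulting map with `v` and `f⁻¹`, and divide by `1 + ε` to obtain a contraction.
As `f ∘ u = v ∘ g`, the resulting map satisfies `t ∘ g = (1 + ε)⁻¹ u`.
-/

/-- A morphism of Banach spaces over `ℂ` (a continuous linear map of norm at most `1`)
`f : K → L` is *pure* if for every `ε > 0`, all finite-dimensional Banach spaces
`A` and `B`, and all morphisms `u : A → K`, `g : A → B`, `v : B → L` satisfying
`f ∘ u = v ∘ g`, there exists a morphism `t : B → K` with `‖t ∘ g - u‖ ≤ ε`. -/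
def IsPure {K L : Type*} [NormedAddCommGroup K] [NormedSpace ℂ K]
    [NormedAddCommGroup L] [NormedSpace ℂ L] (f : K →L[ℂ] L) : Prop :=
  ∀ ε : ℝ, 0 < ε →
    ∀ (A B : Type) [NormedAddCommGroup A] [NormedSpace ℂ A] [FiniteDimensional ℂ A]
      [NormedAddCommGroup B] [NormedSpace ℂ B] [FiniteDimensional ℂ B]
      (u : A →L[ℂ] K) (g : A →L[ℂ] B) (v : B →L[ℂ] L),
      ‖u‖ ≤ 1 → ‖g‖ ≤ 1 → ‖v‖ ≤ 1 → f.comp u = v.comp g →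
      ∃ t : B →L[ℂ] K, ‖t‖ ≤ 1 ∧ ‖t.comp g - u‖ ≤ ε

/-- A (closed) subspace `K` of a Banach space `L` is an *ideal* if for every
finite-dimensional subspace `B` of `L` and every `ε > 0` there exists a linear map
`t : B → K` with `‖t‖ ≤ 1 + ε` and `t x = x` for all `x ∈ K ∩ B`. -/
def IsIdeal {L : Type*} [NormedAddCommGroup L] [NormedSpace ℂ L] (K : Submodule ℂ L) : Prop :=
  ∀ (B : Submodule ℂ L), FiniteDimensional ℂ B →
    ∀ ε : ℝ, 0 < ε →
      ∃ t : B →L[ℂ] K, ‖t‖ ≤ 1 + ε ∧ ∀ x : B, (x : L) ∈ K → ((t x : L) = (x : L))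

/-- Every finite-dimensional normed space, in any universe, is isometric to one in `Type`. -/
lemma exists_linearIsometryEquiv_type (E : Type*) [NormedAddCommGroup E] [NormedSpace ℂ E]
    [FiniteDimensional ℂ E] :
    ∃ (V : Type) (_ : NormedAddCommGroup V) (_ : NormedSpace ℂ V) (_ : FiniteDimensional ℂ V),
      Nonempty (V ≃ₗᵢ[ℂ] E) := by
  -- The additive structure on `V` is kept abstract so that the norm induced from `E` does not
  -- compete with the sup norm on `Fin n → ℂ`.
  have key : ∀ (V : Type) [i1 : AddCommGroup V] [i2 : Module ℂ V] (_ : V ≃ₗ[ℂ] E),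
      ∃ (V : Type) (_ : NormedAddCommGroup V) (_ : NormedSpace ℂ V) (_ : FiniteDimensional ℂ V),
        Nonempty (V ≃ₗᵢ[ℂ] E) := by
    intro V i1 i2 e
    let n1 : NormedAddCommGroup V := NormedAddCommGroup.induced V E e e.injective
    let n2 : NormedSpace ℂ V := NormedSpace.induced ℂ V E e
    exact ⟨V, n1, n2, e.symm.finiteDimensional, ⟨⟨e, fun _ => rfl⟩⟩⟩
  exact key (Fin (Module.finrank ℂ E) → ℂ) (Module.finBasis ℂ E).equivFun.symm

/-- Purity may be tested against finite-dimensional spaces in arbitrary universes. -/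
lemma IsPure.lift {K L : Type*} [NormedAddCommGroup K] [NormedSpace ℂ K]
    [NormedAddCommGroup L] [NormedSpace ℂ L] {f : K →L[ℂ] L} (h : IsPure f)
    {ε : ℝ} (hε : 0 < ε) {A B : Type*}
    [NormedAddCommGroup A] [NormedSpace ℂ A] [FiniteDimensional ℂ A]
    [NormedAddCommGroup B] [NormedSpace ℂ B] [FiniteDimensional ℂ B]
    (u : A →L[ℂ] K) (g : A →L[ℂ] B) (v : B →L[ℂ] L)
    (hu : ∀ a, ‖u a‖ ≤ ‖a‖) (hg : ∀ a, ‖g a‖ ≤ ‖a‖) (hv : ∀ b, ‖v b‖ ≤ ‖b‖)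
    (hc : ∀ a, f (u a) = v (g a)) :
    ∃ t : B →L[ℂ] K, ‖t‖ ≤ 1 ∧ ∀ a, ‖t (g a) - u a‖ ≤ ε * ‖a‖ := by
  obtain ⟨A', _, _, _, ⟨eA⟩⟩ := exists_linearIsometryEquiv_type A
  obtain ⟨B', _, _, _, ⟨eB⟩⟩ := exists_linearIsometryEquiv_type B
  let cA : A' →L[ℂ] A := eA.toContinuousLinearEquiv
  let cB : B' →L[ℂ] B := eB.toContinuousLinearEquiv
  let dB : B →L[ℂ] B' := eB.symm.toContinuousLinearEquiv
  obtain ⟨t, ht, htg⟩ := h ε hε A' B' (u.comp cA) (dB.comp (g.comp cA)) (v.comp cB)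
    (ContinuousLinearMap.opNorm_le_bound _ zero_le_one fun a => by
      simpa [cA] using hu (eA a))
    (ContinuousLinearMap.opNorm_le_bound _ zero_le_one fun a => by
      simpa [cA, dB] using hg (eA a))
    (ContinuousLinearMap.opNorm_le_bound _ zero_le_one fun a => by
      simpa [cB] using hv (eB a))
    (by ext a; simp [cA, cB, dB, hc])
  refine ⟨t.comp dB, ContinuousLinearMap.opNorm_le_bound _ zero_le_one fun b => ?_, fun a => ?_⟩
  · simpa [dB] using t.le_of_opNorm_le ht (dB b)
  · simpa [cA, dB] using ContinuousLinearMap.le_of_opNorm_le _ htg (eA.symm a)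

lemma IsPure.norm_map {K L : Type*} [NormedAddCommGroup K] [NormedSpace ℂ K]
    [NormedAddCommGroup L] [NormedSpace ℂ L] {f : K →L[ℂ] L} (h : IsPure f) (hf : ‖f‖ ≤ 1)
    (x : K) : ‖f x‖ = ‖x‖ := by
  have unit : ∀ y : K, ‖y‖ = 1 → 1 ≤ ‖f y‖ := by
    intro y hy
    refine le_of_forall_pos_le_add fun δ hδ => ?_
    have hfy : ‖f y‖ ≤ 1 := by simpa [hy] using f.le_of_opNorm_le hf y
    -- A positive upper bound `c ∈ [‖f y‖, ‖f y‖ + δ / 2]`, at most `1` so that `g` is a contraction.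
    obtain ⟨c, hc0, hc1, hcy, hcδ⟩ : ∃ c : ℝ, 0 < c ∧ c ≤ 1 ∧ ‖f y‖ ≤ c ∧ c ≤ ‖f y‖ + δ / 2 :=
      ⟨min 1 (‖f y‖ + δ / 2), lt_min one_pos (by positivity), min_le_left _ _,
        le_min hfy (by linarith), min_le_right _ _⟩
    have hcC : (c : ℂ) ≠ 0 := by exact_mod_cast hc0.ne'
    obtain ⟨t, ht, htg⟩ := h.lift (half_pos hδ)
      (ContinuousLinearMap.toSpanSingleton ℂ y)
      (ContinuousLinearMap.toSpanSingleton ℂ (c : ℂ))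
      (ContinuousLinearMap.toSpanSingleton ℂ ((c : ℂ)⁻¹ • f y))
      (fun a => by simp [ContinuousLinearMap.toSpanSingleton_apply, norm_smul, hy])
      (fun a => by
        simp only [ContinuousLinearMap.toSpanSingleton_apply, norm_smul, Complex.norm_real,
          Real.norm_eq_abs, abs_of_pos hc0]
        exact mul_le_of_le_one_right (norm_nonneg _) hc1)
      (fun a => by
        simp only [ContinuousLinearMap.toSpanSingleton_apply, norm_smul, norm_inv,
          Complex.norm_real, Real.norm_eq_abs, abs_of_pos hc0]
        refine mul_le_of_le_one_right (norm_nonneg _) ?_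
        rw [inv_mul_le_iff₀ hc0]
        simpa using hcy)
      (fun a => by
        simp [ContinuousLinearMap.toSpanSingleton_apply, smul_smul, hcC])
    have h1 := htg 1
    have h2 := t.le_of_opNorm_le ht (c : ℂ)
    simp only [ContinuousLinearMap.toSpanSingleton_apply, one_smul, norm_one, mul_one, one_mul,
      Complex.norm_real, Real.norm_eq_abs, abs_of_pos hc0] at h1 h2
    have h3 := norm_sub_norm_le y (t (c : ℂ))
    rw [norm_sub_rev, hy] at h3
    linarith
  refine le_antisymm (by simpa using f.le_of_opNorm_le hf x) ?_
  rcases eq_or_ne x 0 with rfl | hx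
  · simp
  · have hx' : 0 < ‖x‖ := norm_pos_iff.2 hx
    have := unit (((‖x‖ : ℂ)⁻¹) • x) (by simp [norm_smul, hx'.ne'])
    simp only [map_smul, norm_smul, norm_inv, Complex.norm_real, norm_norm] at this
    rwa [le_inv_mul_iff₀ hx', mul_one] at this

lemma IsPure.isIdeal_range {K L : Type*} [NormedAddCommGroup K] [NormedSpace ℂ K]
    [NormedAddCommGroup L] [NormedSpace ℂ L] {f : K →L[ℂ] L} (h : IsPure f)
    (hiso : ∀ x, ‖f x‖ = ‖x‖) : IsIdeal (LinearMap.range (f : K →ₗ[ℂ] L)) := by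
  intro B hB ε hε
  let fi : K →ₗᵢ[ℂ] L := ⟨f, hiso⟩
  let e : K ≃ₗᵢ[ℂ] LinearMap.range (f : K →ₗ[ℂ] L) := fi.equivRange
  have he : ∀ x, ((e x : LinearMap.range (f : K →ₗ[ℂ] L)) : L) = f x := fun x => rfl
  let A : Submodule ℂ B := (LinearMap.range (f : K →ₗ[ℂ] L)).comap B.subtype
  let w : A →L[ℂ] LinearMap.range (f : K →ₗ[ℂ] L) :=
    (B.subtypeL.comp A.subtypeL).codRestrict _ fun a => a.2
  have hw : ∀ a, ((w a : LinearMap.range (f : K →ₗ[ℂ] L)) : L) = ((a : B) : L) := fun _ => rfl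
  let ei : LinearMap.range (f : K →ₗ[ℂ] L) →L[ℂ] K := e.symm.toContinuousLinearEquiv
  let ec : K →L[ℂ] LinearMap.range (f : K →ₗ[ℂ] L) := e.toContinuousLinearEquiv
  let u : A →L[ℂ] K := ei.comp w
  have hfu : ∀ a, f (u a) = ((a : B) : L) := fun a => by
    rw [← he, ← hw]
    simp [u, ei]
  obtain ⟨P, hP⟩ := Submodule.ClosedComplemented.of_finiteDimensional A
  have hδ : 0 < ε / (‖P‖ + 1) := by positivity
  obtain ⟨t, ht, htg⟩ := h.lift hδ u A.subtypeL B.subtypeL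
    (fun a => by rw [← hiso, hfu]; rfl) (fun _ => le_rfl) (fun _ => le_rfl) hfu
  refine ⟨ec.comp (t - (t.comp A.subtypeL - u).comp P),
    ContinuousLinearMap.opNorm_le_bound _ (by positivity) fun b => ?_, fun b hb => ?_⟩
  · have h1 : ‖t b‖ ≤ ‖b‖ := by simpa using t.le_of_opNorm_le ht b
    have h2 := htg (P b)
    have h3 : ε / (‖P‖ + 1) * ‖P b‖ ≤ ε * ‖b‖ := by
      rw [div_mul_eq_mul_div, div_le_iff₀ (by positivity), mul_assoc]
      have := P.le_opNorm b
      have := norm_nonneg b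
      exact mul_le_mul_of_nonneg_left (by nlinarith) hε.le
    have h4 := norm_sub_le (t b) (t (A.subtypeL (P b)) - u (P b))
    have h5 : ‖(ec.comp (t - (t.comp A.subtypeL - u).comp P)) b‖
        = ‖t b - (t (A.subtypeL (P b)) - u (P b))‖ := e.norm_map _
    rw [h5]
    linarith
  · have h1 : P b = ⟨b, hb⟩ := hP ⟨b, hb⟩
    have h2 : (((ec.comp (t - (t.comp A.subtypeL - u).comp P)) b :
        LinearMap.range (f : K →ₗ[ℂ] L)) : L)
        = f (t b - (t (A.subtypeL (P b)) - u (P b))) := he _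
    rw [h2, h1]
    have h3 : A.subtypeL ⟨b, hb⟩ = b := rfl
    rw [h3, sub_sub_cancel, hfu]

lemma isPure_of_isometry_of_isIdeal {K L : Type*} [NormedAddCommGroup K] [NormedSpace ℂ K]
    [NormedAddCommGroup L] [NormedSpace ℂ L] {f : K →L[ℂ] L}
    (hiso : ∀ x, ‖f x‖ = ‖x‖) (hI : IsIdeal (LinearMap.range (f : K →ₗ[ℂ] L))) : IsPure f := by
  intro ε hε A B _ _ _ _ _ _ u g v hu hg hv hc
  let fi : K →ₗᵢ[ℂ] L := ⟨f, hiso⟩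
  let e : K ≃ₗᵢ[ℂ] LinearMap.range (f : K →ₗ[ℂ] L) := fi.equivRange
  have he : ∀ x, ((e x : LinearMap.range (f : K →ₗ[ℂ] L)) : L) = f x := fun x => rfl
  let ei : LinearMap.range (f : K →ₗ[ℂ] L) →L[ℂ] K := e.symm.toContinuousLinearEquiv
  let R : Submodule ℂ L := LinearMap.range (v : B →ₗ[ℂ] L)
  have hR : FiniteDimensional ℂ R := inferInstanceAs
    (FiniteDimensional ℂ (LinearMap.range (v : B →ₗ[ℂ] L)))
  obtain ⟨s, hs, hsR⟩ := hI R hR ε hε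
  let w : B →L[ℂ] R := v.codRestrict R fun b => ⟨b, rfl⟩
  have h0 : 0 < 1 + ε := by positivity
  have hn : ‖((1 + ε : ℝ) : ℂ)⁻¹‖ = (1 + ε)⁻¹ := by
    rw [norm_inv, Complex.norm_real, Real.norm_eq_abs, abs_of_pos h0]
  refine ⟨((1 + ε : ℝ) : ℂ)⁻¹ • ei.comp (s.comp w),
    ContinuousLinearMap.opNorm_le_bound _ zero_le_one fun b => ?_,
    ContinuousLinearMap.opNorm_le_bound _ hε.le fun a => ?_⟩
  · have h1 : ‖v b‖ ≤ 1 * ‖b‖ := v.le_of_opNorm_le hv b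
    have h2 : ‖s (w b)‖ ≤ (1 + ε) * ‖v b‖ := s.le_of_opNorm_le hs (w b)
    have h3 : ‖ei (s (w b))‖ = ‖s (w b)‖ := e.symm.norm_map _
    change ‖((1 + ε : ℝ) : ℂ)⁻¹ • ei (s (w b))‖ ≤ _
    rw [norm_smul, hn, h3, inv_mul_le_iff₀ h0]
    exact h2.trans (mul_le_mul_of_nonneg_left h1 h0.le)
  · have hva : v (g a) = f (u a) := (DFunLike.congr_fun hc a).symm
    have h1 : ei (s (w (g a))) = u a := by
      have : s (w (g a)) = e (u a) := by
        apply Subtype.ext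
        rw [hsR (w (g a)) ⟨u a, hva.symm⟩, he]
        exact hva
      rw [this]
      exact e.symm_apply_apply _
    change ‖((1 + ε : ℝ) : ℂ)⁻¹ • ei (s (w (g a))) - u a‖ ≤ _
    have h2 : ((1 + ε : ℝ) : ℂ)⁻¹ • u a - u a = (((1 + ε)⁻¹ - 1 : ℝ) : ℂ) • u a := by
      push_cast
      rw [sub_smul, one_smul]
    have h3 : |(1 + ε)⁻¹ - 1| ≤ ε := by
      have h4 : (1 + ε)⁻¹ - 1 = -(ε / (1 + ε)) := by field_simp; ring
      rw [h4, abs_neg, abs_of_nonneg (by positivity)]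
      exact div_le_self hε.le (by linarith)
    have h5 : ‖u a‖ ≤ ‖a‖ := by simpa using u.le_of_opNorm_le hu a
    rw [h1, h2, norm_smul, Complex.norm_real, Real.norm_eq_abs]
    exact mul_le_mul h3 h5 (norm_nonneg _) hε.le

/-- A morphism `f : K → L` of Banach spaces is pure if and only if `f` is a linear
isometric embedding and its image `f[K]` is an ideal in `L`. -/
theorem isPure_iff_isometry_and_range_isIdeal {K L : Type*}
    [NormedAddCommGroup K] [NormedSpace ℂ K] [CompleteSpace K]
    [NormedAddCommGroup L] [NormedSpace ℂ L] [CompleteSpace L]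
    (f : K →L[ℂ] L) (hf : ‖f‖ ≤ 1) :
    IsPure f ↔ ((∀ x : K, ‖f x‖ = ‖x‖) ∧ IsIdeal (LinearMap.range (f : K →ₗ[ℂ] L))) :=
  ⟨fun h => ⟨h.norm_map hf, h.isIdeal_range (h.norm_map hf)⟩,
    fun h => isPure_of_isometry_of_isIdeal h.1 h.2⟩
end

section
/- A Banach space K is a Lindenstrauss space if and only if K is approximately injective with respect to isometries between finite-dimensional spaces. -/
/-!
Approximate injectivity implies purity: if `f ∘ u = v ∘ g` with `f` isometric, then
`‖u a‖ = ‖v (g a)‖ ≤ ‖g a‖`, so `u` factors as a contraction `w` through the range of `g`.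
Extending `w` approximately along the isometric inclusion of that range into the codomain
of `g` gives the required map.

Conversely, let `K` be a Lindenstrauss space, `h : A → B` an isometry and `f : A → K` a
contraction. Let `J` be the isometric evaluation map from `K` to `ℓ^∞` of the unit ball of its
dual. By Hahn-Banach in each coordinate, `J ∘ f` extends along `h` to a contraction `v` on `B`,
so `J ∘ f = v ∘ h`, and purity of `J` applied to this square gives the approximate extension.
-/

universe u

/-- A Banach space `K` is a *Lindenstrauss space* if every linear isometric embedding
of `K` into a Banach space is pure. -/
def IsLindenstrauss (K : Type u) [NormedAddCommGroup K] [NormedSpace ℂ K] : Prop :=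
  ∀ (L : Type u) [NormedAddCommGroup L] [NormedSpace ℂ L] [CompleteSpace L]
    (f : K →L[ℂ] L), (∀ x : K, ‖f x‖ = ‖x‖) → IsPure f

/-- A Banach space `K` is *approximately injective w.r.t. isometries between
finite-dimensional spaces* if for every linear isometric embedding `h : A → B` between
finite-dimensional Banach spaces, every morphism `f : A → K` and every `ε > 0` there is
a morphism `g : B → K` with `‖g ∘ h - f‖ ≤ ε`. -/
def ApproxInjFinDimIsometries (K : Type*) [NormedAddCommGroup K] [NormedSpace ℂ K] : Prop :=
  ∀ (A B : Type) [NormedAddCommGroup A] [NormedSpace ℂ A] [FiniteDimensional ℂ A]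
    [NormedAddCommGroup B] [NormedSpace ℂ B] [FiniteDimensional ℂ B]
    (h : A →L[ℂ] B), (∀ x : A, ‖h x‖ = ‖x‖) →
    ∀ f : A →L[ℂ] K, ‖f‖ ≤ 1 →
      ∀ ε : ℝ, 0 < ε →
        ∃ g : B →L[ℂ] K, ‖g‖ ≤ 1 ∧ ‖g.comp h - f‖ ≤ ε

open scoped ENNReal

/-- A Hahn-Banach extension along an isometric embedding rather than a subspace inclusion. -/
lemma exists_extension_along_isometry {A B : Type*} [NormedAddCommGroup A] [NormedSpace ℂ A]
    [NormedAddCommGroup B] [NormedSpace ℂ B] (h : A →L[ℂ] B) (hh : ∀ x, ‖h x‖ = ‖x‖)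
    (φ : A →L[ℂ] ℂ) (hφ : ‖φ‖ ≤ 1) :
    ∃ ψ : B →L[ℂ] ℂ, ‖ψ‖ ≤ 1 ∧ ∀ a, ψ (h a) = φ a := by
  let hi : A →ₗᵢ[ℂ] B := ⟨h.toLinearMap, hh⟩
  let e := hi.equivRange
  obtain ⟨ψ, h1, h2⟩ := exists_extension_norm_eq (LinearMap.range hi.toLinearMap)
    (φ.comp (e.symm.toContinuousLinearEquiv : _ →L[ℂ] A))
  refine ⟨ψ, ?_, fun a => ?_⟩
  · rw [h2]
    refine ContinuousLinearMap.opNorm_le_bound _ zero_le_one fun y => ?_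
    simpa using φ.le_of_opNorm_le hφ (e.symm y)
  · have := h1 (e a)
    have he : ((e a : LinearMap.range hi.toLinearMap) : B) = h a := rfl
    rw [he] at this
    simpa using this

/-- A family of functionals of norm at most `1`, assembled into a contraction to `ℓ^∞`. -/
noncomputable def toLinfty {I E : Type*} [NormedAddCommGroup E] [NormedSpace ℂ E]
    (ψ : I → E →L[ℂ] ℂ) (hψ : ∀ i, ‖ψ i‖ ≤ 1) : E →L[ℂ] lp (fun _ : I => ℂ) ∞ :=
  LinearMap.mkContinuous
    { toFun := fun x => ⟨fun i => ψ i x, memℓp_infty ⟨‖x‖, by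
        rintro _ ⟨i, rfl⟩
        simpa using (ψ i).le_of_opNorm_le (hψ i) x⟩⟩
      map_add' := fun x y => by ext i; exact map_add (ψ i) x y
      map_smul' := fun c x => by ext i; exact map_smul (ψ i) c x }
    1 (fun x => by
      rw [one_mul]
      refine lp.norm_le_of_forall_le (norm_nonneg x) fun i => ?_
      simpa using (ψ i).le_of_opNorm_le (hψ i) x)

lemma toLinfty_apply {I E : Type*} [NormedAddCommGroup E] [NormedSpace ℂ E]
    (ψ : I → E →L[ℂ] ℂ) (hψ : ∀ i, ‖ψ i‖ ≤ 1) (x : E) (i : I) :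
    toLinfty ψ hψ x i = ψ i x := rfl

lemma norm_toLinfty_le {I E : Type*} [NormedAddCommGroup E] [NormedSpace ℂ E]
    (ψ : I → E →L[ℂ] ℂ) (hψ : ∀ i, ‖ψ i‖ ≤ 1) : ‖toLinfty ψ hψ‖ ≤ 1 :=
  LinearMap.mkContinuous_norm_le _ zero_le_one _

lemma IsLindenstrauss.approxInj {K : Type u} [NormedAddCommGroup K] [NormedSpace ℂ K]
    (hK : IsLindenstrauss K) : ApproxInjFinDimIsometries K := by
  intro A B _ _ _ _ _ _ h hh f hf ε hε
  let I := {φ : K →L[ℂ] ℂ // ‖φ‖ ≤ 1}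
  let J := toLinfty (fun φ : I => φ.1) (fun φ => φ.2)
  have hJ : ∀ x, ‖J x‖ = ‖x‖ := by
    intro x
    refine le_antisymm (by simpa using J.le_of_opNorm_le (norm_toLinfty_le _ _) x) ?_
    obtain ⟨φ, hφ, hx⟩ := exists_dual_vector'' ℂ x
    have := lp.norm_apply_le_norm ENNReal.top_ne_zero (J x) (⟨φ, hφ⟩ : I)
    simpa [J, toLinfty_apply, hx] using this
  have hext : ∀ φ : I, ∃ ψ : B →L[ℂ] ℂ, ‖ψ‖ ≤ 1 ∧ ∀ a, ψ (h a) = φ.1.comp f a := fun φ =>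
    exists_extension_along_isometry h hh _
      ((φ.1.opNorm_comp_le f).trans (mul_le_one₀ φ.2 (norm_nonneg _) hf))
  choose ψ hψ hψh using hext
  have hh1 : ‖h‖ ≤ 1 :=
    h.opNorm_le_bound zero_le_one fun x => by rw [hh, one_mul]
  refine hK _ J hJ ε hε A B f h (toLinfty ψ hψ) hf hh1 (norm_toLinfty_le _ _) ?_
  ext a φ
  exact (hψh φ a).symm

lemma ApproxInjFinDimIsometries.isLindenstrauss {K : Type u} [NormedAddCommGroup K]
    [NormedSpace ℂ K] (hK : ApproxInjFinDimIsometries K) : IsLindenstrauss K := by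
  intro L _ _ _ f hf ε hε A B _ _ _ _ _ _ u g v hu hg hv hcomm
  have hug : ∀ a, ‖u a‖ ≤ ‖g a‖ := by
    intro a
    have : f (u a) = v (g a) := DFunLike.congr_fun hcomm a
    rw [← hf, this]
    simpa using v.le_of_opNorm_le hv (g a)
  let R := LinearMap.range g.toLinearMap
  obtain ⟨s, hs⟩ := g.toLinearMap.rangeRestrict.exists_rightInverse_of_surjective
    (LinearMap.range_rangeRestrict _)
  have hs' : ∀ y : R, g (s y) = y := fun y =>
    congrArg Subtype.val (LinearMap.congr_fun hs y)
  let w : R →L[ℂ] K := (u.toLinearMap ∘ₗ s).mkContinuous 1 fun y => by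
    simpa [hs'] using hug (s y)
  -- `u` factors through `g` as `w`, because `s (g a)` and `a` differ by an element of
  -- `ker g`, which `u` annihilates.
  have hw : ∀ a, w ⟨g a, a, rfl⟩ = u a := by
    intro a
    have h0 := hug (s ⟨g a, a, rfl⟩ - a)
    rw [map_sub, map_sub, hs', sub_self, norm_zero] at h0
    exact sub_eq_zero.1 (norm_le_zero_iff.1 h0)
  obtain ⟨t, ht, htw⟩ := hK R B R.subtypeL (fun _ => rfl) w
    (LinearMap.mkContinuous_norm_le _ zero_le_one _) ε hε
  refine ⟨t, ht, ContinuousLinearMap.opNorm_le_bound _ hε.le fun a => ?_⟩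
  have h1 := (t.comp R.subtypeL - w).le_of_opNorm_le htw ⟨g a, a, rfl⟩
  have h2 : ‖g a‖ ≤ ‖a‖ := by simpa using g.le_of_opNorm_le hg a
  calc ‖(t.comp g - u) a‖ = ‖(t.comp R.subtypeL - w) ⟨g a, a, rfl⟩‖ := by
        simp [hw]
    _ ≤ ε * ‖g a‖ := h1
    _ ≤ ε * ‖a‖ := by gcongr

/-- A Banach space `K` is a Lindenstrauss space if and only if `K` is approximately
injective w.r.t. isometries between finite-dimensional spaces. -/
theorem isLindenstrauss_iff_approxInj (K : Type u)
    [NormedAddCommGroup K] [NormedSpace ℂ K] [CompleteSpace K] :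
    IsLindenstrauss K ↔ ApproxInjFinDimIsometries K :=
  ⟨IsLindenstrauss.approxInj, ApproxInjFinDimIsometries.isLindenstrauss⟩
end

section
/- Approximate injectivity descends along pure morphisms: let h : A → B be a morphism between finite-dimensional Banach spaces and let L be a Banach space that is approximately injective to h, i.e. for every morphism u : A → L and every ε > 0 there exists a morphism w : B → L with ‖w ∘ h − u‖ ≤ ε. If f : K → L is a pure morphism of Banach spaces, then K is approximately injective to h. -/
/-- Pulling a norm back along a linear equivalence makes the equivalence isometric. -/
lemma exists_norm_of_linearEquiv {E : Type*} [NormedAddCommGroup E] [NormedSpace ℂ E]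
    {F : Type} [AddCommGroup F] [Module ℂ F] (e : F ≃ₗ[ℂ] E) :
    ∃ (F' : Type) (_ : NormedAddCommGroup F') (_ : NormedSpace ℂ F'),
      Nonempty (F' ≃ₗᵢ[ℂ] E) := by
  let i : NormedAddCommGroup F := NormedAddCommGroup.induced F E e e.injective
  let : NormedSpace ℂ F := NormedSpace.induced ℂ F E e
  exact ⟨F, i, inferInstance, ⟨⟨e, fun _ => rfl⟩⟩⟩

/-- A finite-dimensional normed space in any universe has an isometric copy in `Type`. -/
lemma exists_small_model (E : Type*) [NormedAddCommGroup E] [NormedSpace ℂ E]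
    [FiniteDimensional ℂ E] :
    ∃ (F : Type) (_ : NormedAddCommGroup F) (_ : NormedSpace ℂ F), Nonempty (F ≃ₗᵢ[ℂ] E) :=
  exists_norm_of_linearEquiv (Module.finBasis ℂ E).equivFun.symm

/-- The defining property of pure morphisms, for finite-dimensional spaces in any universe. -/
lemma IsPure.exists_lift {A P K L : Type*}
    [NormedAddCommGroup A] [NormedSpace ℂ A] [FiniteDimensional ℂ A]
    [NormedAddCommGroup P] [NormedSpace ℂ P] [FiniteDimensional ℂ P]
    [NormedAddCommGroup K] [NormedSpace ℂ K] [NormedAddCommGroup L] [NormedSpace ℂ L]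
    {f : K →L[ℂ] L} (hf : IsPure f) {ε : ℝ} (hε : 0 < ε)
    (u : A →L[ℂ] K) (g : A →L[ℂ] P) (v : P →L[ℂ] L)
    (hu : ‖u‖ ≤ 1) (hg : ‖g‖ ≤ 1) (hv : ‖v‖ ≤ 1) (hcomm : f.comp u = v.comp g) :
    ∃ t : P →L[ℂ] K, ‖t‖ ≤ 1 ∧ ‖t.comp g - u‖ ≤ ε := by
  obtain ⟨A', _, _, ⟨e⟩⟩ := exists_small_model A
  obtain ⟨P', _, _, ⟨k⟩⟩ := exists_small_model P
  have : FiniteDimensional ℂ A' := e.symm.toLinearEquiv.finiteDimensional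
  have : FiniteDimensional ℂ P' := k.symm.toLinearEquiv.finiteDimensional
  let ec : A' →L[ℂ] A := e.toLinearIsometry.toContinuousLinearMap
  let kc : P' →L[ℂ] P := k.toLinearIsometry.toContinuousLinearMap
  let kc' : P →L[ℂ] P' := k.symm.toLinearIsometry.toContinuousLinearMap
  obtain ⟨t, ht, htu⟩ := hf ε hε A' P' (u.comp ec) (kc'.comp (g.comp ec)) (v.comp kc)
    (ContinuousLinearMap.opNorm_le_bound _ zero_le_one fun x => by
      simpa [ec] using u.le_of_opNorm_le hu (e x))
    (ContinuousLinearMap.opNorm_le_bound _ zero_le_one fun x => by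
      simpa [ec, kc'] using g.le_of_opNorm_le hg (e x))
    (ContinuousLinearMap.opNorm_le_bound _ zero_le_one fun x => by
      simpa [kc] using v.le_of_opNorm_le hv (k x))
    (by
      ext x
      simpa [ec, kc, kc'] using DFunLike.congr_fun hcomm (e x))
  refine ⟨t.comp kc', ContinuousLinearMap.opNorm_le_bound _ zero_le_one fun x => ?_,
    ContinuousLinearMap.opNorm_le_bound _ hε.le fun x => ?_⟩
  · simpa [kc'] using t.le_of_opNorm_le ht (k.symm x)
  · simpa [ec, kc'] using ContinuousLinearMap.le_of_opNorm_le _ htu (e.symm x)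

/-- Approximate injectivity descends along pure morphisms: if `L` is approximately
injective to a morphism `h : A → B` between finite-dimensional Banach spaces and
`f : K → L` is pure, then `K` is approximately injective to `h`. -/
theorem approxInj_of_isPure {A B K L : Type*}
    [NormedAddCommGroup A] [NormedSpace ℂ A] [FiniteDimensional ℂ A]
    [NormedAddCommGroup B] [NormedSpace ℂ B] [FiniteDimensional ℂ B]
    [NormedAddCommGroup K] [NormedSpace ℂ K] [CompleteSpace K]
    [NormedAddCommGroup L] [NormedSpace ℂ L] [CompleteSpace L]
    (h : A →L[ℂ] B) (hh : ‖h‖ ≤ 1)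
    (hL : ∀ u : A →L[ℂ] L, ‖u‖ ≤ 1 → ∀ ε : ℝ, 0 < ε →
      ∃ w : B →L[ℂ] L, ‖w‖ ≤ 1 ∧ ‖w.comp h - u‖ ≤ ε)
    (f : K →L[ℂ] L) (hf : ‖f‖ ≤ 1) (hpure : IsPure f) :
    ∀ u : A →L[ℂ] K, ‖u‖ ≤ 1 → ∀ ε : ℝ, 0 < ε →
      ∃ w : B →L[ℂ] K, ‖w‖ ≤ 1 ∧ ‖w.comp h - u‖ ≤ ε := by
  intro u hu ε hε
  obtain ⟨δ, hδ, hδ1, hδε⟩ : ∃ δ : ℝ, 0 < δ ∧ δ ≤ 1 ∧ δ + δ ≤ ε :=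
    ⟨min (ε / 2) 1, by positivity, min_le_right _ _, by linarith [min_le_left (ε / 2) 1]⟩
  have hfu : ‖f.comp u‖ ≤ 1 :=
    (f.opNorm_comp_le u).trans (mul_le_one₀ hf (norm_nonneg _) hu)
  obtain ⟨w, hw, hwh⟩ := hL (f.comp u) hfu δ hδ
  let TA : A →L[ℂ] L × B × A :=
    (f.comp u).prod (h.prod ((δ : ℂ) • ContinuousLinearMap.id ℂ A))
  let TB : B →L[ℂ] L × B × A := w.prod ((ContinuousLinearMap.id ℂ B).prod 0)
  let P : Submodule ℂ (L × B × A) := LinearMap.range (TA.coprod TB).toLinearMap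
  have hδn : ‖(δ : ℂ)‖ = δ := by simp [abs_of_pos hδ]
  have hAP : ∀ a, TA a ∈ P := fun a => ⟨(a, 0), by simp⟩
  have hBP : ∀ b, TB b ∈ P := fun b => ⟨(0, b), by simp⟩
  let g : A →L[ℂ] P := TA.codRestrict P hAP
  let k : B →L[ℂ] P := TB.codRestrict P hBP
  let v : P →L[ℂ] L := (ContinuousLinearMap.fst ℂ L (B × A)).comp P.subtypeL
  have hg : ‖g‖ ≤ 1 := ContinuousLinearMap.opNorm_le_bound _ zero_le_one fun a => by
    change ‖(f (u a), h a, (δ : ℂ) • a)‖ ≤ 1 * ‖a‖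
    refine max_le ((f.comp u).le_of_opNorm_le hfu a) (max_le (h.le_of_opNorm_le hh a) ?_)
    change ‖(δ : ℂ) • a‖ ≤ _
    rw [norm_smul, hδn]
    gcongr
  have hk : ∀ b, ‖k b‖ ≤ ‖b‖ := fun b => by
    change ‖(w b, b, (0 : A))‖ ≤ ‖b‖
    refine max_le (by simpa using w.le_of_opNorm_le hw b) (max_le le_rfl (by simp))
  have hv : ‖v‖ ≤ 1 := ContinuousLinearMap.opNorm_le_bound _ zero_le_one fun p => by
    rw [one_mul]
    exact norm_fst_le (p : L × B × A)
  have hkg : ∀ c, ‖k (h c) - g c‖ ≤ δ * ‖c‖ := fun c => by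
    change ‖(w (h c) - f (u c), h c - h c, (0 : A) - (δ : ℂ) • c)‖ ≤ δ * ‖c‖
    refine max_le ((w.comp h - f.comp u).le_of_opNorm_le hwh c) (max_le ?_ ?_)
    · simp only [sub_self, norm_zero]
      positivity
    · simp [norm_smul, abs_of_pos hδ]
  obtain ⟨t, ht, htu⟩ := hpure.exists_lift hδ u g v hu hg hv rfl
  refine ⟨t.comp k, ContinuousLinearMap.opNorm_le_bound _ zero_le_one fun b => ?_,
    ContinuousLinearMap.opNorm_le_bound _ hε.le fun c => ?_⟩
  · exact (t.le_of_opNorm_le ht (k b)).trans (by simpa using hk b)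
  · have h1 : ‖t (k (h c) - g c)‖ ≤ δ * ‖c‖ :=
      (t.le_of_opNorm_le ht _).trans (by simpa using hkg c)
    have h2 : ‖t (g c) - u c‖ ≤ δ * ‖c‖ := (t.comp g - u).le_of_opNorm_le htu c
    calc ‖t (k (h c)) - u c‖ = ‖t (k (h c) - g c) + (t (g c) - u c)‖ := by
          rw [map_sub, sub_add_sub_cancel]
      _ ≤ δ * ‖c‖ + δ * ‖c‖ := (norm_add_le _ _).trans (add_le_add h1 h2)
      _ = (δ + δ) * ‖c‖ := by ring
      _ ≤ ε * ‖c‖ := by gcongr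
end
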